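/- arXiv:1401.7702 — 3 statements merged into one kernel-verified Lean document; each statement's English description precedes it below -/
import Mathlib

section
/- Let n be a positive integer and S ⊆ Fin n. Let B be a symmetric real n×n matrix, and let Â be a symmetric real n×n matrix with nonnegative entries such that Â_{ij} = 0 unless both i ∈ S and j ∈ S. Assume ‖Â‖ > ‖B_N‖ + ‖B_S‖. Let λ be the largest eigenvalue of B + Â and let u be a unit (ℓ²-norm one) eigenvector of B + Â with eigenvalue λ. Let u_S be the vector agreeing with u on coordinates in S and zero elsewhere, and set δ = ‖u_S‖₂². Define α = ‖Â‖ + ‖B_S‖ − ‖B_N‖, β = 2‖B_{SN}‖, and γ = ‖B_N‖ + ‖B_S‖ − ‖Â‖. Then δ ≥ ( β² − 2αγ − √( β⁴ − 4β²γ(α+γ) ) ) / ( 2(α² + β²) ). -/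
/-- The spectral norm (ℓ² operator norm) of a real matrix. -/
noncomputable def specNorm {m n : Type*} [Fintype m] [Fintype n] [DecidableEq n]
    (M : Matrix m n ℝ) : ℝ :=
  ‖LinearMap.toContinuousLinearMap (Matrix.toEuclideanLin M)‖

/-- The principal submatrix of `B` on the rows and columns in `S`. -/
def blockS {n : ℕ} (S : Finset (Fin n)) (B : Matrix (Fin n) (Fin n) ℝ) :
    Matrix {i : Fin n // i ∈ S} {i : Fin n // i ∈ S} ℝ :=
  B.submatrix Subtype.val Subtype.val

/-- The principal submatrix of `B` on the rows and columns in the complement of `S`. -/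
def blockN {n : ℕ} (S : Finset (Fin n)) (B : Matrix (Fin n) (Fin n) ℝ) :
    Matrix {i : Fin n // i ∉ S} {i : Fin n // i ∉ S} ℝ :=
  B.submatrix Subtype.val Subtype.val

/-- The off-diagonal block of `B` with rows in `S` and columns in the complement. -/
def blockSN {n : ℕ} (S : Finset (Fin n)) (B : Matrix (Fin n) (Fin n) ℝ) :
    Matrix {i : Fin n // i ∈ S} {i : Fin n // i ∉ S} ℝ :=
  B.submatrix Subtype.val Subtype.val

open Matrix in
theorem aux_bilin {m n : Type*} [Fintype m] [Fintype n] [DecidableEq n]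
    (M : Matrix m n ℝ) (x : m → ℝ) (y : n → ℝ) :
    |x ⬝ᵥ (M *ᵥ y)| ≤ specNorm M * (Real.sqrt (∑ i, x i ^ 2) * Real.sqrt (∑ i, y i ^ 2)) := by
  have h1 : x ⬝ᵥ (M *ᵥ y) = inner ℝ (WithLp.toLp 2 x : EuclideanSpace ℝ m)
      (LinearMap.toContinuousLinearMap (Matrix.toEuclideanLin M) (WithLp.toLp 2 y)) := by
    simp [PiLp.inner_apply, dotProduct, mul_comm]
  have hx : ‖(WithLp.toLp 2 x : EuclideanSpace ℝ m)‖ = Real.sqrt (∑ i, x i ^ 2) := by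
    simp [EuclideanSpace.norm_eq]
  have hy : ‖(WithLp.toLp 2 y : EuclideanSpace ℝ n)‖ = Real.sqrt (∑ i, y i ^ 2) := by
    simp [EuclideanSpace.norm_eq]
  rw [h1, ← hx, ← hy]
  refine (abs_real_inner_le_norm _ _).trans ?_
  have := (LinearMap.toContinuousLinearMap (Matrix.toEuclideanLin M)).le_opNorm (WithLp.toLp 2 y)
  calc _ ≤ _ := mul_le_mul_of_nonneg_left this (norm_nonneg _)
    _ = _ := by rw [specNorm]; ring

theorem aux_nonneg {m n : Type*} [Fintype m] [Fintype n] [DecidableEq n]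
    (M : Matrix m n ℝ) : 0 ≤ specNorm M := norm_nonneg _

open Matrix in
theorem aux_quad {n : Type*} [Fintype n] [DecidableEq n]
    (M : Matrix n n ℝ) (x : n → ℝ) :
    |x ⬝ᵥ (M *ᵥ x)| ≤ specNorm M * (∑ i, x i ^ 2) := by
  have := aux_bilin M x x
  rwa [Real.mul_self_sqrt (Finset.sum_nonneg fun i _ => sq_nonneg _)] at this

open Matrix in
theorem aux_sumsq {n : Type*} [Fintype n] (x : n → ℝ) : ∑ i, x i ^ 2 = x ⬝ᵥ x := by
  simp [dotProduct, sq]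

open Matrix in
theorem aux_norm_le {n : Type*} [Fintype n] [DecidableEq n]
    (M : Matrix n n ℝ) (hM : M.IsSymm) (c : ℝ) (hc : 0 < c)
    (h : ∀ x : n → ℝ, |x ⬝ᵥ (M *ᵥ x)| ≤ c * (∑ i, x i ^ 2)) : specNorm M ≤ c := by
  refine ContinuousLinearMap.opNorm_le_bound _ hc.le fun z => ?_
  obtain ⟨x, rfl⟩ : ∃ x : n → ℝ, z = WithLp.toLp 2 x := ⟨z.ofLp, rfl⟩
  have hx : ‖(WithLp.toLp 2 x : EuclideanSpace ℝ n)‖ = Real.sqrt (∑ i, x i ^ 2) := by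
    simp [EuclideanSpace.norm_eq]
  have hy : ‖LinearMap.toContinuousLinearMap (Matrix.toEuclideanLin M) (WithLp.toLp 2 x)‖
      = Real.sqrt (∑ i, (M *ᵥ x) i ^ 2) := by
    simp [EuclideanSpace.norm_eq]
  rw [hx, hy]
  set y := M *ᵥ x with hyd
  have hsym : ∀ a b : n → ℝ, a ⬝ᵥ (M *ᵥ b) = b ⬝ᵥ (M *ᵥ a) := fun a b => by
    rw [dotProduct_mulVec, dotProduct_comm, ← mulVec_transpose, hM.eq]
  have e1 := (abs_le.1 (h (c • x + y))).2
  have e2 := (abs_le.1 (h (c • x - y))).1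
  rw [aux_sumsq] at e1 e2
  simp only [mulVec_add, mulVec_sub, mulVec_smul, add_dotProduct, sub_dotProduct, dotProduct_add,
    dotProduct_sub, smul_dotProduct, dotProduct_smul, smul_eq_mul] at e1 e2
  rw [hsym x y, ← hyd] at e1 e2
  rw [aux_sumsq, aux_sumsq]
  have key : y ⬝ᵥ y ≤ c ^ 2 * (x ⬝ᵥ x) := by
    have : 4 * c * (y ⬝ᵥ y) ≤ 2 * c * (c ^ 2 * (x ⬝ᵥ x) + y ⬝ᵥ y) := by nlinarith
    have : 2 * (y ⬝ᵥ y) ≤ c ^ 2 * (x ⬝ᵥ x) + y ⬝ᵥ y :=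
      le_of_mul_le_mul_left (by linarith) (show 0 < 2 * c by linarith)
    linarith
  calc _ ≤ Real.sqrt (c ^ 2 * (x ⬝ᵥ x)) := Real.sqrt_le_sqrt key
    _ = _ := by rw [Real.sqrt_mul (sq_nonneg c), Real.sqrt_sq hc.le]

open Matrix in
theorem aux_rayleigh {n : Type*} [Fintype n] [DecidableEq n]
    (M : Matrix n n ℝ) (hM : M.IsSymm) (c : ℝ)
    (h : ∀ (μ : ℝ) (v : n → ℝ), v ≠ 0 → M *ᵥ v = μ • v → μ ≤ c) (x : n → ℝ) :
    x ⬝ᵥ (M *ᵥ x) ≤ c * (∑ i, x i ^ 2) := by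
  have hH : (c • (1 : Matrix n n ℝ) - M).IsHermitian := by
    rw [Matrix.IsHermitian, conjTranspose_eq_transpose_of_trivial]
    simp [hM.eq]
  have hp : (c • (1 : Matrix n n ℝ) - M).PosSemidef := by
    rw [hH.posSemidef_iff_eigenvalues_nonneg]
    intro i
    have e := hH.mulVec_eigenvectorBasis i
    have hne : (hH.eigenvectorBasis i).ofLp ≠ 0 := by
      intro h0
      exact hH.eigenvectorBasis.orthonormal.ne_zero i (by ext j; simp [h0])
    have := h (c - hH.eigenvalues i) _ hne (by
      rw [sub_mulVec, smul_mulVec, one_mulVec] at e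
      rw [sub_smul, ← e]; simp)
    simpa using this
  have := hp.dotProduct_mulVec_nonneg x
  simp only [star_trivial, sub_mulVec, smul_mulVec, one_mulVec, dotProduct_sub, dotProduct_smul, smul_eq_mul] at this
  rw [aux_sumsq]; linarith

theorem aux_final (δ α β γ : ℝ) (hα : 0 < α) (hγ : γ < 0) (hag : 0 ≤ α + γ)
    (h0 : 0 ≤ δ) (h1 : δ ≤ 1)
    (h : -γ ≤ α * δ + β * (Real.sqrt δ * Real.sqrt (1 - δ))) :
    δ ≥ (β ^ 2 - 2 * α * γ - Real.sqrt (β ^ 4 - 4 * β ^ 2 * γ * (α + γ))) /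
      (2 * (α ^ 2 + β ^ 2)) := by
  have root : ∀ d : ℝ, (α * d + γ) ^ 2 ≤ β ^ 2 * (d * (1 - d)) →
      d ≥ (β ^ 2 - 2 * α * γ - Real.sqrt (β ^ 4 - 4 * β ^ 2 * γ * (α + γ))) /
      (2 * (α ^ 2 + β ^ 2)) := by
    intro d hd
    have hP : 0 < α ^ 2 + β ^ 2 := by positivity
    rw [ge_iff_le, div_le_iff₀ (by positivity)]
    have : β ^ 2 - 2 * α * γ - d * (2 * (α ^ 2 + β ^ 2)) ≤
        Real.sqrt (β ^ 4 - 4 * β ^ 2 * γ * (α + γ)) := by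
      refine Real.le_sqrt_of_sq_le ?_
      nlinarith [mul_le_mul_of_nonneg_left hd hP.le]
    linarith
  by_cases hc : 0 ≤ α * δ + γ
  · have hd : -γ / α ≤ δ := by rw [div_le_iff₀ hα]; linarith
    refine ge_trans hd (root _ ?_)
    have e : α * (-γ / α) + γ = 0 := by field_simp; ring
    rw [e]
    have : 0 ≤ -γ / α := div_nonneg (by linarith) hα.le
    have : -γ / α ≤ 1 := by rw [div_le_iff₀ hα]; linarith
    have : 0 ≤ 1 - -γ / α := by linarith
    simp only [ne_eq, OfNat.ofNat_ne_zero, not_false_eq_true, zero_pow]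
    positivity
  · apply root
    have hs : (β * (Real.sqrt δ * Real.sqrt (1 - δ))) ^ 2 = β ^ 2 * (δ * (1 - δ)) := by
      rw [mul_pow, mul_pow, Real.sq_sqrt h0, Real.sq_sqrt (by linarith)]
    rw [← hs]
    push Not at hc
    nlinarith

open Matrix in
theorem aux_split {n : ℕ} (S : Finset (Fin n)) (B : Matrix (Fin n) (Fin n) ℝ) (hB : B.IsSymm)
    (u : Fin n → ℝ) :
    u ⬝ᵥ (B *ᵥ u) = (fun i : {i // i ∈ S} => u i) ⬝ᵥ (blockS S B *ᵥ fun i => u i)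
      + 2 * ((fun i : {i // i ∈ S} => u i) ⬝ᵥ (blockSN S B *ᵥ fun i => u i))
      + (fun i : {i // i ∉ S} => u i) ⬝ᵥ (blockN S B *ᵥ fun i => u i) := by
  have hsp : ∀ f : Fin n → ℝ, ∑ i, f i = ∑ i : {i // i ∈ S}, f i + ∑ i : {i // i ∉ S}, f i :=
    fun f => by
      rw [← Fintype.sum_subtype_add_sum_subtype (fun i => i ∈ S) f]
      congr!
  have hcross : ∑ i : {i // i ∉ S}, ∑ j : {i // i ∈ S}, u i * (B i j * u j)
      = ∑ i : {i // i ∈ S}, ∑ j : {i // i ∉ S}, u i * (B i j * u j) := by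
    rw [Finset.sum_comm]
    refine Finset.sum_congr rfl fun i _ => Finset.sum_congr rfl fun j _ => ?_
    rw [hB.apply i.1 j.1]; ring
  simp only [dotProduct, mulVec, blockS, blockSN, blockN, submatrix_apply, Finset.mul_sum]
  rw [hsp]
  simp_rw [hsp (fun j => u _ * (B _ j * u j)), Finset.sum_add_distrib]
  rw [hcross]
  simp only [← Finset.mul_sum]
  ring

open Matrix in
/-- Let B be symmetric and Â symmetric with nonnegative entries supported
on S×S, with ‖Â‖ > ‖B_N‖ + ‖B_S‖. Let λ be the largest eigenvalue of B + Â with unit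
eigenvector u, let u_S agree with u on S and vanish elsewhere, δ = ‖u_S‖₂², and set
α = ‖Â‖ + ‖B_S‖ − ‖B_N‖, β = 2‖B_{SN}‖, γ = ‖B_N‖ + ‖B_S‖ − ‖Â‖. Then
δ ≥ ( β² − 2αγ − √( β⁴ − 4β²γ(α+γ) ) ) / ( 2(α² + β²) ). -/
theorem stmt3 (n : ℕ) (hn : 0 < n) (S : Finset (Fin n))
    (B Ahat : Matrix (Fin n) (Fin n) ℝ) (hB : B.IsSymm) (hA : Ahat.IsSymm)
    (hnonneg : ∀ i j, 0 ≤ Ahat i j)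
    (hsupp : ∀ i j, ¬(i ∈ S ∧ j ∈ S) → Ahat i j = 0)
    (hgap : specNorm Ahat > specNorm (blockN S B) + specNorm (blockS S B))
    (lam : ℝ) (u uS : Fin n → ℝ)
    (heig : (B + Ahat).mulVec u = lam • u)
    (hmax : ∀ (μ : ℝ) (v : Fin n → ℝ), v ≠ 0 → (B + Ahat).mulVec v = μ • v → μ ≤ lam)
    (hunit : ∑ i, u i ^ 2 = 1)
    (huS : ∀ i, i ∉ S → uS i = 0) (huSe : ∀ i, i ∈ S → uS i = u i)
    (δ : ℝ) (hδ : δ = ∑ i, uS i ^ 2)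
    (α β γ : ℝ)
    (hα : α = specNorm Ahat + specNorm (blockS S B) - specNorm (blockN S B))
    (hβ : β = 2 * specNorm (blockSN S B))
    (hγ : γ = specNorm (blockN S B) + specNorm (blockS S B) - specNorm Ahat) :
    δ ≥ (β ^ 2 - 2 * α * γ - Real.sqrt (β ^ 4 - 4 * β ^ 2 * γ * (α + γ))) /
      (2 * (α ^ 2 + β ^ 2)) := by
  have hsp : ∀ f : Fin n → ℝ, ∑ i, f i = ∑ i : {i // i ∈ S}, f i + ∑ i : {i // i ∉ S}, f i :=
    fun f => by
      rw [← Fintype.sum_subtype_add_sum_subtype (fun i => i ∈ S) f]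
      congr!
  have nN := aux_nonneg (blockN S B)
  have nS := aux_nonneg (blockS S B)
  -- restriction of the quadratic form of `Ahat`
  have hAres : ∀ x y : Fin n → ℝ, (∀ i ∈ S, y i = x i) →
      x ⬝ᵥ (Ahat *ᵥ x) = y ⬝ᵥ (Ahat *ᵥ y) := by
    intro x y hxy
    simp only [dotProduct, mulVec, Finset.mul_sum]
    refine Finset.sum_congr rfl fun i _ => Finset.sum_congr rfl fun j _ => ?_
    by_cases hij : i ∈ S ∧ j ∈ S
    · rw [hxy i hij.1, hxy j hij.2]
    · simp [hsupp i j hij]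
  have hsymm : (B + Ahat).IsSymm := hB.add hA
  -- quadratic form bound on vectors supported in S
  have hq1 : ∀ x : Fin n → ℝ, (∀ i, i ∉ S → x i = 0) →
      x ⬝ᵥ (Ahat *ᵥ x) ≤ (lam + specNorm (blockS S B)) * ∑ i, x i ^ 2 := by
    intro x hx
    have r := aux_rayleigh (B + Ahat) hsymm lam hmax x
    rw [add_mulVec, dotProduct_add, aux_split S B hB x] at r
    have z : (fun i : {i // i ∉ S} => x i) = 0 := by ext i; exact hx i i.2
    rw [z] at r
    simp only [mulVec_zero, dotProduct_zero, mul_zero, add_zero] at r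
    have b := (abs_le.1 (aux_quad (blockS S B) (fun i => x i))).1
    have e : ∑ i, x i ^ 2 = ∑ i : {i // i ∈ S}, x i ^ 2 := by
      rw [hsp, add_eq_left]
      exact Finset.sum_eq_zero fun i _ => by simp [hx i i.2]
    rw [← e] at b
    linarith
  have hc0 : 0 ≤ lam + specNorm (blockS S B) := by
    rcases S.eq_empty_or_nonempty with hS | ⟨i, hi⟩
    · exfalso
      have : Ahat = 0 := by
        ext i j; exact hsupp i j (by simp [hS])
      have : specNorm Ahat = 0 := by simp [this, specNorm]
      linarith
    · have := hq1 (Pi.single i 1) (fun j hj => by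
        rw [Pi.single_eq_of_ne]; rintro rfl; exact hj hi)
      have e : ∑ j, (Pi.single i (1 : ℝ) : Fin n → ℝ) j ^ 2 = 1 := by
        rw [aux_sumsq]; simp
      rw [e] at this
      simp only [mulVec_single_one, single_one_dotProduct, col_apply, mul_one] at this
      exact (hnonneg i i).trans this
  have hq2 : ∀ x : Fin n → ℝ,
      x ⬝ᵥ (Ahat *ᵥ x) ≤ (lam + specNorm (blockS S B)) * ∑ i, x i ^ 2 := by
    intro x
    rw [hAres x (fun i => if i ∈ S then x i else 0) (fun i hi => by simp [hi])]
    refine (hq1 _ (fun i hi => by simp [hi])).trans (mul_le_mul_of_nonneg_left ?_ hc0)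
    refine Finset.sum_le_sum fun i _ => ?_
    split_ifs
    · exact le_rfl
    · simp [sq_nonneg]
  have hq3 : ∀ x : Fin n → ℝ,
      |x ⬝ᵥ (Ahat *ᵥ x)| ≤ (lam + specNorm (blockS S B)) * ∑ i, x i ^ 2 := by
    intro x
    have h := hq2 (fun i => |x i|)
    simp only [sq_abs] at h
    refine le_trans ?_ h
    simp only [dotProduct, mulVec, Finset.mul_sum]
    refine (Finset.abs_sum_le_sum_abs _ _).trans (Finset.sum_le_sum fun i _ => ?_)
    refine (Finset.abs_sum_le_sum_abs _ _).trans (Finset.sum_le_sum fun j _ => ?_)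
    rw [abs_mul, abs_mul, abs_of_nonneg (hnonneg i j)]
  have hlow : specNorm Ahat ≤ lam + specNorm (blockS S B) := by
    refine le_of_forall_pos_le_add fun ε hε => ?_
    refine aux_norm_le Ahat hA _ (by linarith) fun x => (hq3 x).trans ?_
    exact mul_le_mul_of_nonneg_right (by linarith) (Finset.sum_nonneg fun i _ => sq_nonneg _)
  have eS : ∑ i : {i // i ∈ S}, u i ^ 2 = δ := by
    rw [hδ, hsp (fun i => uS i ^ 2)]
    have : ∑ i : {i // i ∉ S}, uS i ^ 2 = 0 :=
      Finset.sum_eq_zero fun i _ => by simp [huS i i.2]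
    rw [this, add_zero]
    exact Finset.sum_congr rfl fun i _ => by rw [huSe i i.2]
  have eN : ∑ i : {i // i ∉ S}, u i ^ 2 = 1 - δ := by
    have := hsp (fun i => u i ^ 2)
    linarith
  have d0 : 0 ≤ δ := by rw [← eS]; exact Finset.sum_nonneg fun i _ => sq_nonneg _
  have d1 : 0 ≤ 1 - δ := by rw [← eN]; exact Finset.sum_nonneg fun i _ => sq_nonneg _
  have hup : lam = u ⬝ᵥ ((B + Ahat) *ᵥ u) := by
    rw [heig, dotProduct_smul, ← aux_sumsq, hunit]; simp
  rw [add_mulVec, dotProduct_add, aux_split S B hB u, hAres u uS huSe] at hup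
  have b1 := (abs_le.1 (aux_quad Ahat uS)).2
  have b2 := (abs_le.1 (aux_quad (blockS S B) (fun i => u i))).2
  have b3 := (abs_le.1 (aux_quad (blockN S B) (fun i => u i))).2
  have b4 := (abs_le.1 (aux_bilin (blockSN S B) (fun i => u i) (fun i => u i))).2
  rw [← hδ] at b1
  rw [eS] at b2 b4
  rw [eN] at b3 b4
  refine aux_final δ α β γ (by linarith) (by linarith) (by linarith) d0 (by linarith) ?_
  rw [hα, hβ, hγ]
  linarith
end

section
/- Let α, β, γ, δ be real numbers with β ≥ 0, −α ≤ γ < 0, and 0 ≤ δ ≤ 1. If αδ + β√(δ(1−δ)) + γ ≥ 0, then δ ≥ ( β² − 2αγ − √( β⁴ − 4β²γ(α+γ) ) ) / ( 2(α² + β²) ). -/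
/-- Let α, β, γ, δ be real numbers with β ≥ 0, −α ≤ γ < 0, and 0 ≤ δ ≤ 1.
If αδ + β√(δ(1−δ)) + γ ≥ 0, then
δ ≥ ( β² − 2αγ − √( β⁴ − 4β²γ(α+γ) ) ) / ( 2(α² + β²) ). -/
theorem stmt6 (α β γ δ : ℝ) (hβ : 0 ≤ β) (hαγ : -α ≤ γ) (hγ : γ < 0)
    (hδ0 : 0 ≤ δ) (hδ1 : δ ≤ 1)
    (h : α * δ + β * Real.sqrt (δ * (1 - δ)) + γ ≥ 0) :
    δ ≥ (β ^ 2 - 2 * α * γ - Real.sqrt (β ^ 4 - 4 * β ^ 2 * γ * (α + γ))) /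
      (2 * (α ^ 2 + β ^ 2)) := by
  have hα : 0 < α := by linarith
  have hA : 0 < 2 * (α ^ 2 + β ^ 2) := by positivity
  have key : ∀ x : ℝ, (α * x + γ) ^ 2 ≤ β ^ 2 * (x * (1 - x)) →
      β ^ 2 - 2 * α * γ - 2 * (α ^ 2 + β ^ 2) * x ≤
        Real.sqrt (β ^ 4 - 4 * β ^ 2 * γ * (α + γ)) := by
    intro x hx
    apply Real.le_sqrt_of_sq_le
    have h1 := mul_le_mul_of_nonneg_left hx (by positivity : 0 ≤ 4 * (α ^ 2 + β ^ 2))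
    nlinarith [h1]
  rw [ge_iff_le, div_le_iff₀ hA]
  rcases le_total (α * δ + γ) 0 with hc | hc
  · have h0 : 0 ≤ δ * (1 - δ) := mul_nonneg hδ0 (by linarith)
    have h2 : (α * δ + γ) ^ 2 ≤ (β * Real.sqrt (δ * (1 - δ))) ^ 2 := by
      apply sq_le_sq'
      · linarith
      · have := mul_nonneg hβ (Real.sqrt_nonneg (δ * (1 - δ)))
        linarith
    rw [mul_pow, Real.sq_sqrt h0] at h2
    linarith [key δ h2]
  · have hx1 : -γ / α ≤ δ := by
      rw [div_le_iff₀ hα]; linarith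
    have hx0 : 0 ≤ -γ / α := div_nonneg (by linarith) hα.le
    have h3 : α * (-γ / α) + γ = 0 := by field_simp; ring
    have h4 : (α * (-γ / α) + γ) ^ 2 ≤ β ^ 2 * (-γ / α * (1 - -γ / α)) := by
      rw [h3, zero_pow two_ne_zero]
      exact mul_nonneg (sq_nonneg _) (mul_nonneg hx0 (by linarith))
    linarith [key _ h4, mul_le_mul_of_nonneg_left hx1 hA.le]
end

section
/- Let k and k̂ be vectors in ℝⁿ with nonnegative entries, and assume k ≠ 0. Then ‖ kkᵀ/‖k‖₁ − (k+k̂)(k+k̂)ᵀ/‖k+k̂‖₁ ‖ ≤ ( ‖k̂‖₁‖k‖₂² + 2‖k‖₁‖k‖₂‖k̂‖₂ + ‖k‖₁‖k̂‖₂² ) / ‖k‖₁². -/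
/-- The ℓ¹ norm of a vector in ℝⁿ. -/
def l1Norm {n : ℕ} (v : Fin n → ℝ) : ℝ := ∑ i, |v i|

/-- The ℓ² (Euclidean) norm of a vector in ℝⁿ. -/
noncomputable def l2Norm {n : ℕ} (v : Fin n → ℝ) : ℝ := Real.sqrt (∑ i, v i ^ 2)

lemma specNorm_add_le' {n : ℕ} (A B : Matrix (Fin n) (Fin n) ℝ) :
    specNorm (A + B) ≤ specNorm A + specNorm B := by
  unfold specNorm
  rw [map_add, map_add]
  exact norm_add_le _ _

lemma specNorm_smul' {n : ℕ} (c : ℝ) (A : Matrix (Fin n) (Fin n) ℝ) :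
    specNorm (c • A) = |c| * specNorm A := by
  unfold specNorm
  rw [map_smul, map_smul, norm_smul, Real.norm_eq_abs]

lemma l2Norm_eq' {n : ℕ} (v : Fin n → ℝ) : l2Norm v = ‖WithLp.toLp 2 v‖ := by
  simp [l2Norm, EuclideanSpace.norm_eq]

lemma specNorm_vecMulVec_le {n : ℕ} (u v : Fin n → ℝ) :
    specNorm (Matrix.vecMulVec u v) ≤ l2Norm u * l2Norm v := by
  unfold specNorm
  rw [l2Norm_eq', l2Norm_eq']
  refine ContinuousLinearMap.opNorm_le_bound _ (by positivity) fun x => ?_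
  have h : (LinearMap.toContinuousLinearMap (Matrix.toEuclideanLin (Matrix.vecMulVec u v))) x
      = (inner ℝ (WithLp.toLp 2 v) x) • WithLp.toLp 2 u := by
    ext i
    simp [Matrix.toLpLin_apply, Matrix.mulVec, dotProduct, Matrix.vecMulVec_apply,
      PiLp.inner_apply, Finset.sum_mul]
    exact Finset.sum_congr rfl fun j _ => by ring
  rw [h, norm_smul]
  have := norm_inner_le_norm (𝕜 := ℝ) (WithLp.toLp 2 v) x
  calc _ ≤ (‖WithLp.toLp 2 v‖ * ‖x‖) * ‖WithLp.toLp 2 u‖ := by gcongr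
    _ = _ := by ring

/-- Let k and k̂ be vectors in ℝⁿ with nonnegative entries, k ≠ 0. Then
‖ kkᵀ/‖k‖₁ − (k+k̂)(k+k̂)ᵀ/‖k+k̂‖₁ ‖ ≤
( ‖k̂‖₁‖k‖₂² + 2‖k‖₁‖k‖₂‖k̂‖₂ + ‖k‖₁‖k̂‖₂² ) / ‖k‖₁². -/
theorem stmt10 (n : ℕ) (k khat : Fin n → ℝ)
    (hk : ∀ i, 0 ≤ k i) (hkhat : ∀ i, 0 ≤ khat i) (hk0 : k ≠ 0) :
    specNorm ((l1Norm k)⁻¹ • Matrix.vecMulVec k k -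
        (l1Norm (k + khat))⁻¹ • Matrix.vecMulVec (k + khat) (k + khat)) ≤
      (l1Norm khat * (l2Norm k) ^ 2 + 2 * l1Norm k * l2Norm k * l2Norm khat +
        l1Norm k * (l2Norm khat) ^ 2) / (l1Norm k) ^ 2 := by
  have ha : 0 < l1Norm k := by
    obtain ⟨i, hi⟩ := Function.ne_iff.mp hk0
    exact Finset.sum_pos' (fun j _ => abs_nonneg _) ⟨i, Finset.mem_univ _, abs_pos.mpr hi⟩
  have hb : 0 ≤ l1Norm khat := Finset.sum_nonneg fun j _ => abs_nonneg _
  have hs : l1Norm (k + khat) = l1Norm k + l1Norm khat := by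
    unfold l1Norm
    rw [← Finset.sum_add_distrib]
    refine Finset.sum_congr rfl fun i _ => ?_
    rw [Pi.add_apply, abs_of_nonneg (hk i), abs_of_nonneg (hkhat i),
      abs_of_nonneg (add_nonneg (hk i) (hkhat i))]
  have hp : 0 ≤ l2Norm k := Real.sqrt_nonneg _
  have hq : 0 ≤ l2Norm khat := Real.sqrt_nonneg _
  rw [hs]
  have hkk := specNorm_vecMulVec_le k k
  have hkh := specNorm_vecMulVec_le k khat
  have hhk := specNorm_vecMulVec_le khat k
  have hhh := specNorm_vecMulVec_le khat khat
  generalize l1Norm k = a at *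
  generalize l1Norm khat = b at *
  generalize l2Norm k = p at *
  generalize l2Norm khat = q at *
  have hab : 0 < a + b := by linarith
  have e : a⁻¹ • Matrix.vecMulVec k k - (a + b)⁻¹ • Matrix.vecMulVec (k + khat) (k + khat)
      = (b / (a * (a + b))) • Matrix.vecMulVec k k + (-(a + b)⁻¹) • (Matrix.vecMulVec k khat +
        Matrix.vecMulVec khat k + Matrix.vecMulVec khat khat) := by
    ext i j
    simp [Matrix.vecMulVec_apply]
    field_simp
    ring
  rw [e]
  refine (specNorm_add_le' _ _).trans ?_
  rw [specNorm_smul', specNorm_smul', abs_neg, abs_of_nonneg (by positivity),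
    abs_of_nonneg (by positivity)]
  have h3 : specNorm (Matrix.vecMulVec k khat + Matrix.vecMulVec khat k +
      Matrix.vecMulVec khat khat) ≤ p * q + q * p + q * q := by
    have h1 := specNorm_add_le' (Matrix.vecMulVec k khat + Matrix.vecMulVec khat k)
      (Matrix.vecMulVec khat khat)
    have h2 := specNorm_add_le' (Matrix.vecMulVec k khat) (Matrix.vecMulVec khat k)
    linarith
  calc _ ≤ b / (a * (a + b)) * (p * p) + (a + b)⁻¹ * (p * q + q * p + q * q) := by gcongr
    _ ≤ b / (a * a) * (p * p) + a⁻¹ * (p * q + q * p + q * q) := by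
      gcongr <;> linarith
    _ = _ := by
      field_simp
      ring
end
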